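/- Let X be a complete separable ultrametric space such that every closed ball of positive diameter is the union of finitely many maximal proper closed subballs and every strictly decreasing sequence of closed balls has diameters tending to zero. Let ν be a Borel measure on X which assigns finite positive measure to every closed ball of positive diameter and to every maximal proper closed subball of such a ball, and suppose there is an increasing sequence of closed balls whose union is X and whose ν-measures tend to infinity. For each closed ball I of positive diameter, with pairwise disjoint maximal proper closed subballs I₁, …, I_{p_I} (p_I ≥ 2), let (ψ_{I,j})_{j=1}^{p_I−1} be an orthonormal basis of the (p_I−1)-dimensional subspace of L²(X,ν) consisting of linear combinations of the indicator functions of I₁, …, I_{p_I} with zero ν-integral. Then the total family {ψ_{I,j}}, indexed by all closed balls I of positive diameter and 1 ≤ j ≤ p_I − 1, is an orthonormal (Hilbert) basis of L²(X,ν). -/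

import Mathlib

open MeasureTheory

/-- A closed ball in a metric space: a set of the form `B̄(a,r)` with `r ≥ 0`. -/
def IsClosedBall {X : Type*} [MetricSpace X] (B : Set X) : Prop :=
  ∃ (a : X) (r : ℝ), 0 ≤ r ∧ B = Metric.closedBall a r

/-- `B'` is a maximal proper closed subball of `B`: a closed ball strictly contained
in `B` such that no closed ball is strictly between `B'` and `B`. -/
def IsMaxSubball {X : Type*} [MetricSpace X] (B' B : Set X) : Prop :=
  IsClosedBall B' ∧ B' ⊂ B ∧ ∀ B'' : Set X, IsClosedBall B'' → B' ⊂ B'' → ¬(B'' ⊂ B)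

/-!
Two distinct balls are either disjoint, or one lies in a maximal proper subball of the other, on
which the wavelets of the larger ball are constant: either way their wavelets are orthogonal.

For completeness, a function `f` orthogonal to all the wavelets of a ball `B` has the same average
over each maximal proper subball of `B` as over `B`, since by a dimension count the wavelets span
all zero-mean combinations of the indicators. As no strictly decreasing sequence of balls stays
above a ball of positive radius, the average of `f` over such a ball equals its average over every
larger ball, in particular over the exhausting balls. The latter averages of an `L²` function tend
to zero because the measures tend to infinity. So `f` has zero integral over every ball of positive
radius and finite measure, and balls form a π-system generating the Borel sets.
-/

open Metric Set Filter Submodule TopologicalSpace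
open scoped ENNReal InnerProductSpace Topology

section ClosedBalls

variable {X : Type*} [MetricSpace X] {A B C D : Set X}

theorem isClosedBall_closedBall (a : X) {r : ℝ} (hr : 0 ≤ r) : IsClosedBall (closedBall a r) :=
  ⟨a, r, hr, rfl⟩

theorem IsClosedBall.nonempty (hB : IsClosedBall B) : B.Nonempty := by
  obtain ⟨a, r, hr, rfl⟩ := hB
  exact nonempty_closedBall.2 hr

theorem IsClosedBall.measurableSet [MeasurableSpace X] [OpensMeasurableSpace X]
    (hB : IsClosedBall B) : MeasurableSet B := by
  obtain ⟨a, r, -, rfl⟩ := hB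
  exact measurableSet_closedBall

theorem IsClosedBall.trichotomy [IsUltrametricDist X] (hA : IsClosedBall A)
    (hB : IsClosedBall B) : A ⊆ B ∨ B ⊆ A ∨ Disjoint A B := by
  obtain ⟨a, r, -, rfl⟩ := hA
  obtain ⟨b, s, -, rfl⟩ := hB
  exact IsUltrametricDist.closedBall_subset_trichotomy (x := a) (y := b) (r := r) (s := s)

theorem IsMaxSubball.ediam_pos (hC : IsMaxSubball C B) : 0 < ediam B := by
  obtain ⟨x, hx⟩ := hC.1.nonempty
  obtain ⟨y, hyB, hyC⟩ := exists_of_ssubset hC.2.1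
  exact ediam_pos_iff.2 ⟨x, hC.2.1.subset hx, y, hyB, ne_of_mem_of_not_mem hx hyC⟩

theorem IsMaxSubball.subset_or_disjoint [IsUltrametricDist X] (hC : IsMaxSubball C B)
    (hA : IsClosedBall A) (hAB : A ⊂ B) : A ⊆ C ∨ Disjoint A C := by
  rcases hA.trichotomy hC.1 with h | h | h
  · exact .inl h
  · exact .inl (by_contra fun hAC => hC.2.2 A hA ⟨h, hAC⟩ hAB)
  · exact .inr h

theorem IsMaxSubball.disjoint_of_ne [IsUltrametricDist X] (hC : IsMaxSubball C B)
    (hD : IsMaxSubball D B) (hne : C ≠ D) : Disjoint C D := by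
  refine (hD.subset_or_disjoint hC.1 hC.2.1).resolve_left fun hCD => ?_
  exact hC.2.2 D hD.1 (hCD.ssubset_of_ne hne) hD.2.1

theorem exists_isMaxSubball_superset [IsUltrametricDist X]
    (hcover : B = ⋃₀ {C | IsMaxSubball C B}) (hA : IsClosedBall A) (hAB : A ⊂ B) :
    ∃ C, IsMaxSubball C B ∧ A ⊆ C := by
  obtain ⟨x, hx⟩ := hA.nonempty
  obtain ⟨C, hC, hxC⟩ : x ∈ ⋃₀ {C | IsMaxSubball C B} := hcover ▸ hAB.subset hx
  exact ⟨C, hC, (hC.subset_or_disjoint hA hAB).resolve_right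
    (not_disjoint_iff.2 ⟨x, hx, hxC⟩)⟩

theorem isWF_isClosedBall_superset_closedBall
    (hdiam : ∀ B : ℕ → Set X, (∀ n, IsClosedBall (B n)) → (∀ n, B (n + 1) ⊂ B n) →
      Tendsto (fun n => ediam (B n)) atTop (𝓝 0)) (a : X) {r : ℝ} (hr : 0 < r) :
    {B | IsClosedBall B ∧ closedBall a r ⊆ B}.IsWF := by
  refine isWF_iff_no_descending_seq.2 fun B hB hmem => ?_
  have hlim := hdiam B (fun n => (hmem n).1) fun n => hB n.lt_succ_self
  obtain ⟨n, hn⟩ := (hlim.eventually_lt_const (ENNReal.ofReal_pos.2 hr)).exists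
  refine (hB n.lt_succ_self).2 (subset_trans (fun x hx => ?_) (hmem (n + 1)).2)
  have ha : a ∈ B n := (hmem n).2 (mem_closedBall_self hr.le)
  rw [mem_closedBall, ← ENNReal.ofReal_le_ofReal_iff hr.le, ← edist_dist]
  exact (edist_le_ediam_of_mem hx ha).trans hn.le

theorem eq_of_forall_isMaxSubball_eq [IsUltrametricDist X] {β : Type*} {φ : Set X → β}
    (hcover : ∀ B : Set X, IsClosedBall B → 0 < ediam B → B = ⋃₀ {C | IsMaxSubball C B})
    (hdiam : ∀ B : ℕ → Set X, (∀ n, IsClosedBall (B n)) → (∀ n, B (n + 1) ⊂ B n) →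
      Tendsto (fun n => ediam (B n)) atTop (𝓝 0))
    (hφ : ∀ B C : Set X, IsClosedBall B → IsMaxSubball C B → φ C = φ B)
    {a : X} {r : ℝ} (hr : 0 < r) (hB : IsClosedBall B) (hsub : closedBall a r ⊆ B) :
    φ (closedBall a r) = φ B := by
  refine (isWF_isClosedBall_superset_closedBall hdiam a hr).induction
    (P := fun B => φ (closedBall a r) = φ B) ⟨hB, hsub⟩ fun B ⟨hB, hsub⟩ ih => ?_
  rcases hsub.eq_or_ssubset with rfl | hss
  · rfl
  have hpos : 0 < ediam B := by
    obtain ⟨y, hyB, hy⟩ := exists_of_ssubset hss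
    have ha := mem_closedBall_self (x := a) hr.le
    exact ediam_pos_iff.2 ⟨a, hsub ha, y, hyB, ne_of_mem_of_not_mem ha hy⟩
  obtain ⟨C, hC, haC⟩ :=
    exists_isMaxSubball_superset (hcover B hB hpos) (isClosedBall_closedBall a hr.le) hss
  exact (ih C ⟨hC.1, haC⟩ hC.2.1).trans (hφ B C hB hC)

end ClosedBalls

section Wavelets

variable {X 𝕜 : Type*} [MetricSpace X] [MeasurableSpace X] [RCLike 𝕜] {ν : Measure X}
  {A B : Set X} {φ ψ : Lp 𝕜 2 ν}

/-- An ultrametric wavelet on the ball `B`: an element of `L²(X, ν)` with zero mean which is a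
linear combination of the indicator functions of the maximal proper closed subballs of `B`. The
linear combination is encoded as a function which vanishes off `B` and is constant on each of
these subballs. -/
def IsUltrametricWavelet (ν : Measure X) (B : Set X) (φ : Lp 𝕜 2 ν) : Prop :=
  ∃ g : X → 𝕜, (∀ x ∉ B, g x = 0) ∧ (∀ C, IsMaxSubball C B → ∀ x ∈ C, ∀ y ∈ C, g x = g y) ∧
    ∫ x, g x ∂ν = 0 ∧ φ =ᵐ[ν] g

namespace IsUltrametricWavelet

theorem setIntegral_eq_zero (hφ : IsUltrametricWavelet ν B φ) (hB : MeasurableSet B) :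
    ∫ x in B, φ x ∂ν = 0 := by
  obtain ⟨g, hg0, -, hgint, hφg⟩ := hφ
  rw [setIntegral_congr_ae hB (hφg.mono fun x hx _ => hx),
    setIntegral_eq_integral_of_forall_compl_eq_zero hg0, hgint]

theorem inner_eq_zero_of_disjoint (hφ : IsUltrametricWavelet ν A φ)
    (hψ : IsUltrametricWavelet ν B ψ) (hAB : Disjoint A B) : ⟪φ, ψ⟫_𝕜 = 0 := by
  obtain ⟨g, hg0, -, -, hφg⟩ := hφ
  obtain ⟨h, hh0, -, -, hψh⟩ := hψ
  rw [L2.inner_def]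
  refine integral_eq_zero_of_ae ?_
  filter_upwards [hφg, hψh] with x hx hx'
  by_cases hxA : x ∈ A
  · simp [hx', hh0 x (disjoint_left.1 hAB hxA)]
  · simp [hx, hg0 x hxA]

theorem inner_eq_zero_of_subset_isMaxSubball {C : Set X} (hφ : IsUltrametricWavelet ν A φ)
    (hψ : IsUltrametricWavelet ν B ψ) (hC : IsMaxSubball C B) (hAC : A ⊆ C) :
    ⟪φ, ψ⟫_𝕜 = 0 := by
  obtain ⟨g, hg0, -, hgint, hφg⟩ := hφ
  obtain ⟨h, -, hhconst, -, hψh⟩ := hψ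
  obtain ⟨c, hc⟩ := hC.1.nonempty
  calc ⟪φ, ψ⟫_𝕜 = ∫ x, h c * starRingEnd 𝕜 (g x) ∂ν := by
        rw [L2.inner_def]
        refine integral_congr_ae ?_
        filter_upwards [hφg, hψh] with x hx hx'
        rw [hx, hx', RCLike.inner_apply]
        by_cases hxA : x ∈ A
        · rw [hhconst C hC x (hAC hxA) c hc]
        · simp [hg0 x hxA]
    _ = 0 := by rw [integral_const_mul, integral_conj, hgint, map_zero, mul_zero]

theorem inner_eq_zero_of_ne [IsUltrametricDist X] (hφ : IsUltrametricWavelet ν A φ)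
    (hψ : IsUltrametricWavelet ν B ψ) (hA : IsClosedBall A) (hB : IsClosedBall B)
    (hAcover : A = ⋃₀ {C | IsMaxSubball C A}) (hBcover : B = ⋃₀ {C | IsMaxSubball C B})
    (hne : A ≠ B) : ⟪φ, ψ⟫_𝕜 = 0 := by
  rcases hA.trichotomy hB with h | h | h
  · obtain ⟨C, hC, hAC⟩ := exists_isMaxSubball_superset hBcover hA (h.ssubset_of_ne hne)
    exact hφ.inner_eq_zero_of_subset_isMaxSubball hψ hC hAC
  · obtain ⟨C, hC, hBC⟩ := exists_isMaxSubball_superset hAcover hB (h.ssubset_of_ne hne.symm)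
    exact inner_eq_zero_symm.1 (hψ.inner_eq_zero_of_subset_isMaxSubball hφ hC hBC)
  · exact hφ.inner_eq_zero_of_disjoint hψ h

end IsUltrametricWavelet

end Wavelets

section IndicatorSpan

variable {α ι 𝕜 : Type*} [MeasurableSpace α] {μ : Measure α} [RCLike 𝕜] {s : ι → Set α}

/-- The space of linear combinations in `Lᵖ` of the indicator functions of the sets `s i`. When
the `s i` are the maximal subballs of a ball, the wavelets of that ball lie in it. -/
def indicatorSpan (𝕜 : Type*) [RCLike 𝕜] (p : ℝ≥0∞) (hs : ∀ i, MeasurableSet (s i))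
    (hμs : ∀ i, μ (s i) ≠ ∞) : Submodule 𝕜 (Lp 𝕜 p μ) :=
  span 𝕜 (range fun i => indicatorConstLp p (hs i) (hμs i) 1)

theorem mem_indicatorSpan [Finite ι] {p : ℝ≥0∞} (hs : ∀ i, MeasurableSet (s i))
    (hμs : ∀ i, μ (s i) ≠ ∞) (hdisj : Pairwise (Function.onFun Disjoint s)) {φ : Lp 𝕜 p μ}
    {g : α → 𝕜} (hφ : φ =ᵐ[μ] g) (hg0 : ∀ x ∉ ⋃ i, s i, g x = 0)
    (hg : ∀ i, ∀ x ∈ s i, ∀ y ∈ s i, g x = g y) : φ ∈ indicatorSpan 𝕜 p hs hμs := by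
  have := Fintype.ofFinite ι
  have hval : ∀ i, ∃ c, ∀ x ∈ s i, g x = c := fun i => by
    rcases (s i).eq_empty_or_nonempty with h | ⟨y, hy⟩
    · exact ⟨0, by simp [h]⟩
    · exact ⟨g y, fun x hx => hg i x hx y hy⟩
  choose c hc using hval
  have hg_sum : g = fun x => ∑ i, c i * (s i).indicator (fun _ => 1) x := by
    have hbi : ⋃ i ∈ Finset.univ, s i = ⋃ i, s i := by simp
    rw [← indicator_eq_self.2 (fun x hx => not_imp_comm.1 (hg0 x) hx), ← hbi,
      Finset.indicator_biUnion _ _ fun i _ j _ hij => hdisj hij]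
    ext x
    refine Finset.sum_congr rfl fun i _ => ?_
    by_cases hx : x ∈ s i <;> simp [hx, hc i x]
  have hφ_sum : φ = ∑ i, c i • indicatorConstLp p (hs i) (hμs i) (1 : 𝕜) := by
    refine Lp.ext (hφ.trans ?_)
    have hsmul : ∀ i, (c i • indicatorConstLp p (hs i) (hμs i) 1 : Lp 𝕜 p μ) =ᵐ[μ]
        fun x => c i * (s i).indicator (fun _ => 1) x := fun i => by
      filter_upwards [Lp.coeFn_smul (c i) (indicatorConstLp p (hs i) (hμs i) (1 : 𝕜)),
        indicatorConstLp_coeFn (p := p) (hs := hs i) (hμs := hμs i) (c := (1 : 𝕜))] with x hx hx'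
      rw [hx, Pi.smul_apply, hx', smul_eq_mul]
    filter_upwards [Lp.coeFn_finsetSum Finset.univ
      fun i => c i • indicatorConstLp p (hs i) (hμs i) (1 : 𝕜), ae_all_iff.2 hsmul] with x hx hx'
    simp only [hx, Finset.sum_apply, hx', hg_sum]
  exact hφ_sum ▸ sum_mem fun i _ => smul_mem _ _ (subset_span (mem_range_self i))

theorem indicatorConstLp_iUnion_mem_indicatorSpan [Finite ι] {p : ℝ≥0∞}
    (hs : ∀ i, MeasurableSet (s i)) (hμs : ∀ i, μ (s i) ≠ ∞)
    (hdisj : Pairwise (Function.onFun Disjoint s)) (hU : MeasurableSet (⋃ i, s i))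
    (hμ : μ (⋃ i, s i) ≠ ∞) : indicatorConstLp p hU hμ 1 ∈ indicatorSpan 𝕜 p hs hμs := by
  refine mem_indicatorSpan hs hμs hdisj indicatorConstLp_coeFn
    (fun x hx => indicator_of_notMem hx _) fun i x hx y hy => ?_
  rw [indicator_of_mem (mem_iUnion_of_mem i hx), indicator_of_mem (mem_iUnion_of_mem i hy)]

theorem finrank_indicatorSpan_le [Finite ι] {p : ℝ≥0∞} (hs : ∀ i, MeasurableSet (s i))
    (hμs : ∀ i, μ (s i) ≠ ∞) : Module.finrank 𝕜 (indicatorSpan 𝕜 p hs hμs) ≤ Nat.card ι := by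
  have := Fintype.ofFinite ι
  exact (finrank_range_le_card _).trans_eq Nat.card_eq_fintype_card.symm

instance [Finite ι] {p : ℝ≥0∞} (hs : ∀ i, MeasurableSet (s i)) (hμs : ∀ i, μ (s i) ≠ ∞) :
    FiniteDimensional 𝕜 (indicatorSpan 𝕜 p hs hμs) :=
  FiniteDimensional.span_of_finite 𝕜 (finite_range _)

end IndicatorSpan

section InnerProductSpace

variable {𝕜 E κ : Type*} [RCLike 𝕜] [NormedAddCommGroup E] [InnerProductSpace 𝕜 E] [Fintype κ]
  {ψ : κ → E} {V : Submodule 𝕜 E} [FiniteDimensional 𝕜 V] {u : E}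

theorem span_range_eq_orthogonal_inf (hψ : LinearIndependent 𝕜 ψ) (huV : u ∈ V) (hu : u ≠ 0)
    (hψV : ∀ j, ψ j ∈ V) (hψu : ∀ j, ⟪u, ψ j⟫_𝕜 = 0)
    (hV : Module.finrank 𝕜 V ≤ Fintype.card κ + 1) : span 𝕜 (range ψ) = (𝕜 ∙ u)ᗮ ⊓ V := by
  have hle : span 𝕜 (range ψ) ≤ (𝕜 ∙ u)ᗮ ⊓ V := by
    rw [span_le]
    rintro _ ⟨j, rfl⟩
    exact ⟨mem_orthogonal_singleton_iff_inner_right.2 (hψu j), hψV j⟩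
  have hfin : FiniteDimensional 𝕜 ((𝕜 ∙ u)ᗮ ⊓ V : Submodule 𝕜 E) :=
    finiteDimensional_of_le inf_le_right
  refine eq_of_le_of_finrank_le hle ?_
  have hdim := finrank_add_inf_finrank_orthogonal ((span_singleton_le_iff_mem u V).2 huV)
  rw [finrank_span_singleton hu] at hdim
  rw [finrank_span_eq_card hψ]
  lia

theorem inner_mul_inner_eq_of_forall_inner_eq_zero (hψ : LinearIndependent 𝕜 ψ) (huV : u ∈ V)
    (hu : u ≠ 0) (hψV : ∀ j, ψ j ∈ V) (hψu : ∀ j, ⟪u, ψ j⟫_𝕜 = 0)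
    (hV : Module.finrank 𝕜 V ≤ Fintype.card κ + 1) {f v : E} (hf : ∀ j, ⟪ψ j, f⟫_𝕜 = 0)
    (hv : v ∈ V) : ⟪u, u⟫_𝕜 * ⟪v, f⟫_𝕜 = ⟪v, u⟫_𝕜 * ⟪u, f⟫_𝕜 := by
  have hw : ⟪u, u⟫_𝕜 • v - ⟪u, v⟫_𝕜 • u ∈ span 𝕜 (range ψ) := by
    rw [span_range_eq_orthogonal_inf hψ huV hu hψV hψu hV]
    refine ⟨mem_orthogonal_singleton_iff_inner_right.2 ?_,
      sub_mem (smul_mem _ _ hv) (smul_mem _ _ huV)⟩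
    rw [inner_sub_right, inner_smul_right, inner_smul_right, mul_comm, sub_self]
  have hψf : span 𝕜 (range ψ) ⟂ 𝕜 ∙ f := by
    rw [isOrtho_span]
    rintro _ ⟨j, rfl⟩ _ rfl
    exact hf j
  have hwf := hψf.inner_eq hw (mem_span_singleton_self f)
  rwa [inner_sub_left, inner_smul_left, inner_smul_left, inner_conj_symm, inner_conj_symm,
    sub_eq_zero] at hwf

end InnerProductSpace

section OrthogonalToZeroMean

variable {α ι 𝕜 κ : Type*} [MeasurableSpace α] {μ : Measure α} [RCLike 𝕜] {s : ι → Set α}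
  [Finite ι] [Fintype κ] {ψ : κ → Lp 𝕜 2 μ} {f : Lp 𝕜 2 μ}

theorem measureReal_mul_setIntegral_eq_of_forall_inner_eq_zero (hs : ∀ i, MeasurableSet (s i))
    (hμs : ∀ i, μ (s i) ≠ ∞) (hdisj : Pairwise (Function.onFun Disjoint s))
    (hμ0 : μ (⋃ i, s i) ≠ 0) (hμ : μ (⋃ i, s i) ≠ ∞) (hcard : Nat.card ι ≤ Fintype.card κ + 1)
    (hli : LinearIndependent 𝕜 ψ) (hψ : ∀ j, ψ j ∈ indicatorSpan 𝕜 2 hs hμs)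
    (hψ0 : ∀ j, ∫ x in ⋃ i, s i, ψ j x ∂μ = 0) (hf : ∀ j, ⟪ψ j, f⟫_𝕜 = 0) (i : ι) :
    (μ.real (⋃ i, s i) : 𝕜) * ∫ x in s i, f x ∂μ = μ.real (s i) * ∫ x in ⋃ i, s i, f x ∂μ := by
  have hU : MeasurableSet (⋃ i, s i) := .iUnion hs
  have hu : indicatorConstLp 2 hU hμ (1 : 𝕜) ≠ 0 := by
    rw [← norm_ne_zero_iff, norm_indicatorConstLp two_ne_zero ENNReal.ofNat_ne_top, norm_one,
      one_mul]
    exact (Real.rpow_pos_of_pos (ENNReal.toReal_pos hμ0 hμ) _).ne'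
  have hψu : ∀ j, ⟪indicatorConstLp 2 hU hμ 1, ψ j⟫_𝕜 = 0 := fun j => by
    rw [L2.inner_indicatorConstLp_one, hψ0]
  have hsi : indicatorConstLp 2 (hs i) (hμs i) 1 ∈ indicatorSpan 𝕜 2 hs hμs :=
    subset_span (mem_range_self i)
  have key := inner_mul_inner_eq_of_forall_inner_eq_zero hli
    (indicatorConstLp_iUnion_mem_indicatorSpan hs hμs hdisj hU hμ) hu hψ hψu
    ((finrank_indicatorSpan_le hs hμs).trans hcard) hf hsi
  rwa [L2.inner_indicatorConstLp_one_indicatorConstLp_one _ _ hμ hμ,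
    L2.inner_indicatorConstLp_one_indicatorConstLp_one _ _ (hμs i) hμ,
    L2.inner_indicatorConstLp_one, L2.inner_indicatorConstLp_one, inter_self,
    inter_eq_left.2 (subset_iUnion s i)] at key

theorem setAverage_eq_setAverage_iUnion_of_forall_inner_eq_zero
    (hs : ∀ i, MeasurableSet (s i)) (hμs : ∀ i, μ (s i) ≠ ∞)
    (hdisj : Pairwise (Function.onFun Disjoint s)) (hμ : μ (⋃ i, s i) ≠ ∞)
    (hcard : Nat.card ι ≤ Fintype.card κ + 1)
    (hli : LinearIndependent 𝕜 ψ) (hψ : ∀ j, ψ j ∈ indicatorSpan 𝕜 2 hs hμs)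
    (hψ0 : ∀ j, ∫ x in ⋃ i, s i, ψ j x ∂μ = 0) (hf : ∀ j, ⟪ψ j, f⟫_𝕜 = 0) {i : ι}
    (hi : μ (s i) ≠ 0) : ⨍ x in s i, f x ∂μ = ⨍ x in ⋃ i, s i, f x ∂μ := by
  have hμ0 : μ (⋃ i, s i) ≠ 0 := fun h => hi (measure_mono_null (subset_iUnion s i) h)
  have key := measureReal_mul_setIntegral_eq_of_forall_inner_eq_zero hs hμs hdisj hμ0 hμ hcard hli
    hψ hψ0 hf i
  rw [← RCLike.real_smul_eq_coe_mul, ← RCLike.real_smul_eq_coe_mul] at key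
  rw [setAverage_eq, setAverage_eq, inv_smul_eq_iff₀ ((measureReal_ne_zero_iff (hμs i)).2 hi),
    smul_comm, eq_inv_smul_iff₀ ((measureReal_ne_zero_iff hμ).2 hμ0), key]

end OrthogonalToZeroMean

theorem IsUltrametricWavelet.setAverage_eq_of_forall_inner_eq_zero {X 𝕜 κ : Type*} [MetricSpace X]
    [IsUltrametricDist X] [MeasurableSpace X] [OpensMeasurableSpace X] [RCLike 𝕜] [Fintype κ]
    {ν : Measure X} {B C : Set X} {ψ : κ → Lp 𝕜 2 ν} {f : Lp 𝕜 2 ν}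
    (hψ : ∀ j, IsUltrametricWavelet ν B (ψ j)) (hB : IsClosedBall B)
    (hcover : B = ⋃₀ {C | IsMaxSubball C B})
    (hcard : Nat.card {C | IsMaxSubball C B} = Fintype.card κ + 1) (hνB : ν B ≠ ∞)
    (hli : LinearIndependent 𝕜 ψ) (hf : ∀ j, ⟪ψ j, f⟫_𝕜 = 0) (hC : IsMaxSubball C B)
    (hνC : ν C ≠ 0) : ⨍ x in C, f x ∂ν = ⨍ x in B, f x ∂ν := by
  let s : {C | IsMaxSubball C B} → Set X := (↑)
  have : Finite {C | IsMaxSubball C B} := Nat.finite_of_card_ne_zero (by lia)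
  have hs : ∀ D, MeasurableSet (s D) := fun D => D.2.1.measurableSet
  have hνs : ∀ D, ν (s D) ≠ ∞ := fun D => measure_ne_top_of_subset D.2.2.1.subset hνB
  have hdisj : Pairwise (Function.onFun Disjoint s) :=
    fun D D' hne => D.2.disjoint_of_ne D'.2 (Subtype.coe_ne_coe.2 hne)
  have hBs : B = ⋃ D, s D := hcover.trans sUnion_eq_iUnion
  have hψV : ∀ j, ψ j ∈ indicatorSpan 𝕜 2 hs hνs := fun j => by
    obtain ⟨g, hg0, hg, -, hψg⟩ := hψ j
    exact mem_indicatorSpan hs hνs hdisj hψg (hBs ▸ hg0) fun D => hg D.1 D.2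
  have hψ0 : ∀ j, ∫ x in ⋃ D, s D, ψ j x ∂ν = 0 := fun j => by
    rw [← hBs, (hψ j).setIntegral_eq_zero hB.measurableSet]
  have hi : ν (s ⟨C, hC⟩) ≠ 0 := hνC
  have key := setAverage_eq_setAverage_iUnion_of_forall_inner_eq_zero hs hνs hdisj
    (by rwa [← hBs]) hcard.le hli hψV hψ0 hf hi
  rwa [← hBs] at key

section Averages

variable {α E ι : Type*} [MeasurableSpace α] {μ : Measure α} [NormedAddCommGroup E]
  [NormedSpace ℝ E] {p : ℝ≥0∞} {f : α → E}

theorem enorm_setAverage_le (hp : 1 ≤ p) (hf : AEStronglyMeasurable f μ) (s : Set α) :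
    ‖⨍ x in s, f x ∂μ‖ₑ ≤ (μ s)⁻¹ ^ (1 / p).toReal * eLpNorm f p μ := by
  rcases eq_or_ne (μ s) 0 with h0 | h0
  · simp [Measure.restrict_eq_zero.2 h0]
  rcases eq_or_ne (μ s) ∞ with htop | htop
  · simp [setAverage_eq, measureReal_def, htop]
  have : IsProbabilityMeasure ((μ s)⁻¹ • μ.restrict s) :=
    ⟨by simp [ENNReal.inv_mul_cancel h0 htop]⟩
  calc ‖⨍ x in s, f x ∂μ‖ₑ ≤ eLpNorm f 1 ((μ s)⁻¹ • μ.restrict s) := by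
        rw [setAverage_eq', eLpNorm_one_eq_lintegral_enorm]
        exact enorm_integral_le_lintegral_enorm f
    _ ≤ eLpNorm f p ((μ s)⁻¹ • μ.restrict s) :=
        eLpNorm_le_eLpNorm_of_exponent_le hp (hf.restrict.smul_measure _)
    _ ≤ (μ s)⁻¹ ^ (1 / p).toReal * eLpNorm f p (μ.restrict s) := eLpNorm_smul_measure_le ..
    _ ≤ (μ s)⁻¹ ^ (1 / p).toReal * eLpNorm f p μ := by
        gcongr
        exact Measure.restrict_le_self

theorem tendsto_setAverage_zero (hp : 1 ≤ p) (hp' : p ≠ ∞) (hf : MemLp f p μ) {s : ι → Set α}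
    {l : Filter ι} (hs : Tendsto (fun i => μ (s i)) l (𝓝 ∞)) :
    Tendsto (fun i => ⨍ x in s i, f x ∂μ) l (𝓝 0) := by
  have hpow : Tendsto (fun i => (μ (s i))⁻¹ ^ (1 / p).toReal) l (𝓝 0) := by
    have hexp : 0 < (1 / p).toReal := by
      simpa using ENNReal.toReal_pos (zero_lt_one.trans_le hp).ne' hp'
    have hinv : Tendsto (fun i => (μ (s i))⁻¹) l (𝓝 0) := by simpa using hs.inv
    exact ENNReal.zero_rpow_of_pos hexp ▸ hinv.ennrpow_const (1 / p).toReal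
  have hlim : Tendsto (fun i => (μ (s i))⁻¹ ^ (1 / p).toReal * eLpNorm f p μ) l (𝓝 0) := by
    simpa using ENNReal.Tendsto.mul_const hpow (.inr hf.eLpNorm_ne_top)
  rw [tendsto_zero_iff_enorm_tendsto_zero]
  exact tendsto_of_tendsto_of_tendsto_of_le_of_le tendsto_const_nhds hlim (fun _ => zero_le)
    fun i => enorm_setAverage_le hp hf.1 (s i)

end Averages

section AEEqZero

theorem ae_eq_zero_of_isPiSystem {α E : Type*} [m : MeasurableSpace α] {μ : Measure α}
    [NormedAddCommGroup E] [NormedSpace ℝ E] [CompleteSpace E] {f : α → E} {S : Set (Set α)}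
    (hgen : m = MeasurableSpace.generateFrom S) (hpi : IsPiSystem S) (hf : Integrable f μ)
    (huniv : ∫ x, f x ∂μ = 0) (hS : ∀ s ∈ S, ∫ x in s, f x ∂μ = 0) : f =ᵐ[μ] 0 := by
  refine hf.ae_eq_zero_of_forall_setIntegral_eq_zero ?_
  rintro s hs -
  induction s, hs using MeasurableSpace.induction_on_inter hgen hpi with
  | empty => simp
  | basic s hs => exact hS s hs
  | compl s hs ih => rw [setIntegral_compl hs hf, huniv, ih, sub_zero]
  | iUnion s hdisj hs ih => simp [integral_iUnion hs hdisj hf.integrableOn, ih]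

variable {X E : Type*} [PseudoMetricSpace X] [IsUltrametricDist X] [NormedAddCommGroup E]
  [NormedSpace ℝ E] {f : X → E}

theorem isPiSystem_closedBall_of_isUltrametricDist :
    IsPiSystem {B : Set X | ∃ a r, 0 < r ∧ B = closedBall a r} := by
  rintro _ ⟨a, r, hr, rfl⟩ _ ⟨b, s, hs, rfl⟩ hne
  rcases IsUltrametricDist.closedBall_subset_trichotomy (x := a) (y := b) (r := r) (s := s)
    with h | h | h
  · exact ⟨a, r, hr, inter_eq_left.2 h⟩
  · exact ⟨b, s, hs, inter_eq_right.2 h⟩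
  · exact absurd h (not_disjoint_iff_nonempty_inter.2 hne)

theorem isTopologicalBasis_closedBall_of_isUltrametricDist :
    IsTopologicalBasis {B : Set X | ∃ a r, 0 < r ∧ B = closedBall a r} := by
  refine isTopologicalBasis_of_isOpen_of_nhds ?_ fun a U ha hU => ?_
  · rintro _ ⟨a, r, hr, rfl⟩
    exact IsUltrametricDist.isOpen_closedBall a hr.ne'
  · obtain ⟨r, hr, hrU⟩ := nhds_basis_closedBall.mem_iff.1 (hU.mem_nhds ha)
    exact ⟨_, ⟨a, r, hr, rfl⟩, mem_closedBall_self hr.le, hrU⟩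

theorem ae_eq_zero_of_forall_setIntegral_closedBall_eq_zero [SeparableSpace X] [MeasurableSpace X]
    [BorelSpace X] [CompleteSpace E] {μ : Measure X} (hf : LocallyIntegrable f μ)
    (h : ∀ a r, 0 < r → ∫ x in closedBall a r, f x ∂μ = 0) : f =ᵐ[μ] 0 := by
  have : SecondCountableTopology X := UniformSpace.secondCountable_of_separable X
  have hgen := BorelSpace.measurable_eq.trans
    (isTopologicalBasis_closedBall_of_isUltrametricDist (X := X)).borel_eq_generateFrom
  refine measure_null_of_locally_null _ fun a _ => ?_
  obtain ⟨U, hU, hfU⟩ := hf a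
  obtain ⟨r, hr, hrU⟩ := nhds_basis_closedBall.mem_iff.1 hU
  have hae : f =ᵐ[μ.restrict (closedBall a r)] 0 := by
    refine ae_eq_zero_of_isPiSystem hgen isPiSystem_closedBall_of_isUltrametricDist
      (hfU.mono_set hrU) (h a r hr) ?_
    rintro _ ⟨b, s, hs, rfl⟩
    rw [Measure.restrict_restrict measurableSet_closedBall]
    rcases IsUltrametricDist.closedBall_subset_trichotomy (x := b) (y := a) (r := s) (s := r)
      with hsub | hsub | hdisj
    · rw [inter_eq_left.2 hsub, h b s hs]
    · rw [inter_eq_right.2 hsub, h a r hr]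
    · rw [disjoint_iff_inter_eq_empty.1 hdisj, setIntegral_empty]
  rw [EventuallyEq, ae_restrict_iff' measurableSet_closedBall] at hae
  refine ⟨_, inter_mem_nhdsWithin _ (closedBall_mem_nhds a hr), ?_⟩
  exact measure_mono_null
    (fun x hx (hx' : x ∈ closedBall a r → f x = 0) => hx.1 (hx' hx.2)) (ae_iff.1 hae)

end AEEqZero

section Completeness

variable {X : Type*} [MetricSpace X] [MeasurableSpace X] {ν : Measure X}

theorem measure_closedBall_lt_top_of_forall_ediam_pos [Nontrivial X]
    (hfin : ∀ B : Set X, IsClosedBall B → 0 < ediam B → ν B < ∞) (a : X) (r : ℝ) :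
    ν (closedBall a r) < ∞ := by
  obtain ⟨y, hy⟩ := exists_ne a
  refine (measure_mono (closedBall_subset_closedBall (le_max_left r (dist y a)))).trans_lt
    (hfin _ (isClosedBall_closedBall a (le_max_of_le_right dist_nonneg)) ?_)
  exact ediam_pos_iff.2 ⟨a, by simp, y, by simp, hy.symm⟩

theorem eventually_subset_of_tendsto_measure [IsUltrametricDist X] {ι : Type*} [Preorder ι]
    {D : ι → Set X} (hD : ∀ i, IsClosedBall (D i)) (hmono : Monotone D)
    (hunion : ⋃ i, D i = univ) (hlim : Tendsto (fun i => ν (D i)) atTop (𝓝 ∞)) {B : Set X}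
    (hB : IsClosedBall B) (hνB : ν B < ∞) : ∀ᶠ i in atTop, B ⊆ D i := by
  obtain ⟨b, hb⟩ := hB.nonempty
  obtain ⟨i₀, hi₀⟩ := iUnion_eq_univ_iff.1 hunion b
  filter_upwards [eventually_ge_atTop i₀, hlim.eventually_const_lt hνB] with i hi hνi
  rcases hB.trichotomy (hD i) with h | h | h
  · exact h
  · exact absurd (measure_mono h) hνi.not_ge
  · exact absurd h (not_disjoint_iff.2 ⟨b, hb, hmono hi hi₀⟩)

variable [IsUltrametricDist X] {E : Type*} [NormedAddCommGroup E] [NormedSpace ℝ E] {p : ℝ≥0∞}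
  {f : X → E}

theorem setIntegral_closedBall_eq_zero_of_forall_setAverage_eq
    (hcover : ∀ B : Set X, IsClosedBall B → 0 < ediam B → B = ⋃₀ {C | IsMaxSubball C B})
    (hdiam : ∀ B : ℕ → Set X, (∀ n, IsClosedBall (B n)) → (∀ n, B (n + 1) ⊂ B n) →
      Tendsto (fun n => ediam (B n)) atTop (𝓝 0))
    (hexh : ∃ D : ℕ → Set X, (∀ n, IsClosedBall (D n)) ∧ Monotone D ∧ (⋃ n, D n) = univ ∧
      Tendsto (fun n => ν (D n)) atTop (𝓝 ∞))
    (hp : 1 ≤ p) (hp' : p ≠ ∞) (hf : MemLp f p ν)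
    (hfavg : ∀ B C : Set X, IsClosedBall B → IsMaxSubball C B →
      ⨍ x in C, f x ∂ν = ⨍ x in B, f x ∂ν)
    {a : X} {r : ℝ} (hr : 0 < r) (hνa : ν (closedBall a r) < ∞) :
    ∫ x in closedBall a r, f x ∂ν = 0 := by
  obtain ⟨D, hD, hmono, hunion, hlim⟩ := hexh
  have hevent : ∀ᶠ n in atTop, ⨍ x in D n, f x ∂ν = ⨍ x in closedBall a r, f x ∂ν :=
    (eventually_subset_of_tendsto_measure hD hmono hunion hlim
      (isClosedBall_closedBall a hr.le) hνa).mono fun n hn =>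
        (eq_of_forall_isMaxSubball_eq (φ := fun s => ⨍ x in s, f x ∂ν) hcover hdiam hfavg hr
          (hD n) hn).symm
  have havg : ⨍ x in closedBall a r, f x ∂ν = 0 :=
    tendsto_nhds_unique (tendsto_const_nhds.congr' (hevent.mono fun _ h => h.symm))
      (tendsto_setAverage_zero hp hp' hf hlim)
  rw [← measure_smul_setAverage f hνa.ne, havg, smul_zero]

theorem ae_eq_zero_of_forall_setAverage_eq [SeparableSpace X] [BorelSpace X] [CompleteSpace E]
    (hcover : ∀ B : Set X, IsClosedBall B → 0 < ediam B → B = ⋃₀ {C | IsMaxSubball C B})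
    (hdiam : ∀ B : ℕ → Set X, (∀ n, IsClosedBall (B n)) → (∀ n, B (n + 1) ⊂ B n) →
      Tendsto (fun n => ediam (B n)) atTop (𝓝 0))
    (hfin : ∀ B : Set X, IsClosedBall B → 0 < ediam B → ν B < ∞)
    (hexh : ∃ D : ℕ → Set X, (∀ n, IsClosedBall (D n)) ∧ Monotone D ∧ (⋃ n, D n) = univ ∧
      Tendsto (fun n => ν (D n)) atTop (𝓝 ∞))
    (hp : 1 ≤ p) (hp' : p ≠ ∞) (hf : MemLp f p ν)
    (hfavg : ∀ B C : Set X, IsClosedBall B → IsMaxSubball C B →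
      ⨍ x in C, f x ∂ν = ⨍ x in B, f x ∂ν) : f =ᵐ[ν] 0 := by
  rcases subsingleton_or_nontrivial X with hX | hX
  · obtain ⟨D, -, -, -, hlim⟩ := hexh
    have huniv : ν univ = ∞ :=
      top_unique (le_of_tendsto' hlim fun n => measure_mono (subset_univ _))
    refine .of_forall fun a => ?_
    have hconst : f = fun _ => f a := funext fun x => congrArg f (Subsingleton.elim x a)
    rw [hconst, memLp_const_iff (zero_lt_one.trans_le hp).ne' hp'] at hf
    exact hf.resolve_right huniv.not_lt
  · have hν := measure_closedBall_lt_top_of_forall_ediam_pos hfin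
    have : IsLocallyFiniteMeasure ν := ⟨fun a => ⟨_, closedBall_mem_nhds a one_pos, hν a 1⟩⟩
    exact ae_eq_zero_of_forall_setIntegral_closedBall_eq_zero (hf.locallyIntegrable hp)
      fun a r hr => setIntegral_closedBall_eq_zero_of_forall_setAverage_eq hcover hdiam hexh hp hp'
        hf hfavg hr (hν a r)

end Completeness

theorem orthonormal_sigma {𝕜 E ι : Type*} [RCLike 𝕜] [SeminormedAddCommGroup E]
    [InnerProductSpace 𝕜 E] {κ : ι → Type*} {ψ : (Σ i, κ i) → E}
    (hψ : ∀ i, Orthonormal 𝕜 fun j => ψ ⟨i, j⟩)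
    (hort : ∀ a b, a.1 ≠ b.1 → ⟪ψ a, ψ b⟫_𝕜 = 0) : Orthonormal 𝕜 ψ := by
  refine ⟨fun ⟨i, j⟩ => (hψ i).1 j, fun ⟨i, j⟩ ⟨i', j'⟩ hne => ?_⟩
  rcases eq_or_ne i i' with rfl | hi
  · exact (hψ i).2 fun hj => hne (hj ▸ rfl)
  · exact hort _ _ hi

theorem ultrametric_wavelets_orthonormal_basis_general {X 𝕜 : Type*} [MetricSpace X]
    [IsUltrametricDist X] [SeparableSpace X] [MeasurableSpace X] [BorelSpace X] [RCLike 𝕜]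
    {ν : Measure X}
    (hcover : ∀ B : Set X, IsClosedBall B → 0 < ediam B → B = ⋃₀ {C | IsMaxSubball C B})
    (hdiam : ∀ B : ℕ → Set X, (∀ n, IsClosedBall (B n)) → (∀ n, B (n + 1) ⊂ B n) →
      Tendsto (fun n => ediam (B n)) atTop (𝓝 0))
    (hfin : ∀ B : Set X, IsClosedBall B → 0 < ediam B → ν B < ∞)
    (hpos : ∀ B C : Set X, IsClosedBall B → IsMaxSubball C B → 0 < ν C)
    (hexh : ∃ D : ℕ → Set X, (∀ n, IsClosedBall (D n)) ∧ Monotone D ∧ (⋃ n, D n) = univ ∧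
      Tendsto (fun n => ν (D n)) atTop (𝓝 ∞))
    {κ : {B : Set X // IsClosedBall B ∧ 0 < ediam B} → Type*} [∀ B, Fintype (κ B)]
    (hcard : ∀ B, Nat.card {C | IsMaxSubball C B.1} = Fintype.card (κ B) + 1)
    {ψ : (Σ B, κ B) → Lp 𝕜 2 ν} (hψ : ∀ i, IsUltrametricWavelet ν i.1.1 (ψ i))
    (hon : ∀ B, Orthonormal 𝕜 fun j : κ B => ψ ⟨B, j⟩) :
    Orthonormal 𝕜 ψ ∧ (span 𝕜 (range ψ)).topologicalClosure = ⊤ := by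
  refine ⟨orthonormal_sigma hon fun i j hij => ?_, ?_⟩
  · exact (hψ i).inner_eq_zero_of_ne (hψ j) i.1.2.1 j.1.2.1 (hcover _ i.1.2.1 i.1.2.2)
      (hcover _ j.1.2.1 j.1.2.2) (Subtype.coe_ne_coe.2 hij)
  rw [topologicalClosure_eq_top_iff, Submodule.eq_bot_iff]
  intro f hf
  have hinner : ∀ i, ⟪ψ i, f⟫_𝕜 = 0 := fun i =>
    (mem_orthogonal _ f).1 hf _ (subset_span (mem_range_self i))
  refine (Lp.eq_zero_iff_ae_eq_zero).2 (ae_eq_zero_of_forall_setAverage_eq hcover hdiam hfin hexh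
    one_le_two ENNReal.ofNat_ne_top (Lp.memLp f) fun B C hB hC => ?_)
  exact IsUltrametricWavelet.setAverage_eq_of_forall_inner_eq_zero (fun j => hψ ⟨_, j⟩) hB
    (hcover B hB hC.ediam_pos) (hcard ⟨B, hB, hC.ediam_pos⟩) (hfin B hB hC.ediam_pos).ne
    (hon _).linearIndependent (fun j => hinner ⟨_, j⟩) hC (hpos B C hB hC).ne'

/-- The basis of ultrametric wavelets, case of infinite measure: if the regular
ultrametric space `X` is exhausted by an increasing sequence of closed balls whose
measures tend to infinity, then the family `{ψ_{I,j}}`, where `I` runs over closed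
balls of positive diameter and, for each such `I`, `(ψ_{I,j})_{j=1}^{p_I-1}` is an
orthonormal basis of the space of zero-mean linear combinations of indicators of the
maximal proper closed subballs of `I`, is an orthonormal Hilbert basis of `L²(X,ν)`. -/
theorem ultrametric_wavelets_orthonormal_basis {X : Type*} [MetricSpace X]
    [IsUltrametricDist X] [CompleteSpace X] [TopologicalSpace.SeparableSpace X]
    [MeasurableSpace X] [BorelSpace X] (ν : Measure X)
    (hstruct : ∀ B : Set X, IsClosedBall B → 0 < EMetric.diam B →
      {B' : Set X | IsMaxSubball B' B}.Finite ∧ B = ⋃₀ {B' : Set X | IsMaxSubball B' B})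
    (hdiam : ∀ B : ℕ → Set X, (∀ n, IsClosedBall (B n)) → (∀ n, B (n + 1) ⊂ B n) →
      Filter.Tendsto (fun n => EMetric.diam (B n)) Filter.atTop (nhds 0))
    (hνball : ∀ B : Set X, IsClosedBall B → 0 < EMetric.diam B → 0 < ν B ∧ ν B < ⊤)
    (hνsub : ∀ B B' : Set X, IsClosedBall B → 0 < EMetric.diam B → IsMaxSubball B' B →
      0 < ν B' ∧ ν B' < ⊤)
    (hexh : ∃ D : ℕ → Set X, (∀ n, IsClosedBall (D n)) ∧ Monotone D ∧
      (⋃ n, D n) = Set.univ ∧ Filter.Tendsto (fun n => ν (D n)) Filter.atTop (nhds ⊤))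
    -- `p B` is the number of maximal proper closed subballs of `B`
    (p : Set X → ℕ)
    (hp : ∀ B : Set X, IsClosedBall B → 0 < EMetric.diam B →
      2 ≤ p B ∧ Nat.card {B' : Set X | IsMaxSubball B' B} = p B)
    -- the wavelet family, indexed by balls `I` of positive diameter and `1 ≤ j ≤ p_I - 1`
    (ψ : (Σ B : {B : Set X // IsClosedBall B ∧ 0 < EMetric.diam B}, Fin (p B.1 - 1)) →
      Lp ℂ 2 ν)
    -- each `ψ_{I,j}` is (a.e.) a linear combination of indicators of the maximal
    -- subballs of `I` with zero mean
    (hform : ∀ i, ∃ g : X → ℂ, (∀ x ∉ i.1.1, g x = 0) ∧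
      (∀ B' : Set X, IsMaxSubball B' i.1.1 → ∀ x ∈ B', ∀ y ∈ B', g x = g y) ∧
      (∫ x, g x ∂ν = 0) ∧ (ψ i : X → ℂ) =ᵐ[ν] g)
    -- for each ball `I`, the family `(ψ_{I,j})_j` is orthonormal (hence an orthonormal
    -- basis of the `(p_I - 1)`-dimensional zero-mean space)
    (hon : ∀ B : {B : Set X // IsClosedBall B ∧ 0 < EMetric.diam B},
      Orthonormal ℂ (fun j : Fin (p B.1 - 1) => ψ ⟨B, j⟩)) :
    Orthonormal ℂ ψ ∧ (Submodule.span ℂ (Set.range ψ)).topologicalClosure = ⊤ := by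
  refine ultrametric_wavelets_orthonormal_basis_general (fun B hB hd => (hstruct B hB hd).2) hdiam
    (fun B hB hd => (hνball B hB hd).2) (fun B C hB hC => (hνsub B C hB hC.ediam_pos hC).1) hexh
    (fun B => ?_) hform hon
  obtain ⟨hp2, hcard⟩ := hp B.1 B.2.1 B.2.2
  rw [hcard, Fintype.card_fin, Nat.sub_add_cancel (one_le_two.trans hp2)]
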